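/- arXiv:1907.13587 — 3 statements merged into one kernel-verified Lean document; each statement's English description precedes it below -/
import Mathlib

section
/- Let (μ_k)_{k≥1} be finite positive Borel measures on ℂ such that each μ_k is h_k-dissectible for some scale function h_k and the union of the closed supports of the μ_k is a bounded subset of ℂ. Then there exist constants c_k > 0 and a scale function h such that the measure Σ_k c_k·μ_k is finite and h-dissectible. -/
open MeasureTheory Filter Topology Metric Set Complex
open scoped ENNReal NNReal BigOperators

noncomputable section

/-- The half-open dyadic square of generation `k` at position `(m, n)`:
`[m·2⁻ᵏ, (m+1)·2⁻ᵏ) × [n·2⁻ᵏ, (n+1)·2⁻ᵏ)`, of side length `2⁻ᵏ`. -/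
def dyadicSquare (k m n : ℤ) : Set ℂ :=
  {z : ℂ | (m : ℝ) * 2 ^ (-k) ≤ z.re ∧ z.re < ((m : ℝ) + 1) * 2 ^ (-k) ∧
    (n : ℝ) * 2 ^ (-k) ≤ z.im ∧ z.im < ((n : ℝ) + 1) * 2 ^ (-k)}

/-- The interior `10Q°` of the square `10Q` concentric with the dyadic square `Q` of parameters
`k, m, n` and of ten times its side length. -/
def dilatedSquare (k m n : ℤ) : Set ℂ :=
  {z : ℂ | |z.re - ((m : ℝ) + 1 / 2) * 2 ^ (-k)| < 5 * 2 ^ (-k) ∧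
    |z.im - ((n : ℝ) + 1 / 2) * 2 ^ (-k)| < 5 * 2 ^ (-k)}

/-- A scale function: nondecreasing, positive on `(0,∞)`, tending to `∞`, with
`∫₀¹ t⁻² h(t) dt < ∞`. -/
structure IsScaleFunction (h : ℝ → ℝ) : Prop where
  nonneg : ∀ t, 0 ≤ t → 0 ≤ h t
  mono : ∀ ⦃s t : ℝ⦄, 0 ≤ s → s ≤ t → h s ≤ h t
  pos : ∀ t : ℝ, 0 < t → 0 < h t
  tendsto_atTop : Tendsto h atTop atTop
  integrable : IntegrableOn (fun t => h t / t ^ 2) (Ioc (0 : ℝ) 1)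

/-- The dyadic square of parameters `k, m, n` is heavy with respect to `ν` and the scale
function `h`: `ν(Q) > h(|Q|)`. -/
def IsHeavy (ν : Measure ℂ) (h : ℝ → ℝ) (k m n : ℤ) : Prop :=
  ENNReal.ofReal (h ((2 : ℝ) ^ (-k))) < ν (dyadicSquare k m n)

/-- The open set `G_s(ν) = ⋃ {10Q° : Q heavy dyadic square, |Q| ≤ s}`. -/
def Gset (ν : Measure ℂ) (h : ℝ → ℝ) (s : ℝ) : Set ℂ :=
  ⋃ (kmn : ℤ × ℤ × ℤ)
    (_ : IsHeavy ν h kmn.1 kmn.2.1 kmn.2.2 ∧ (2 : ℝ) ^ (-kmn.1) ≤ s),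
    dilatedSquare kmn.1 kmn.2.1 kmn.2.2

/-- The dyadic 1-Hausdorff content: infimum of `Σᵢ |Qᵢ|` over countable covers by dyadic
squares. -/
def dyadicContent (E : Set ℂ) : ℝ≥0∞ :=
  ⨅ (c : ℕ → ℤ × ℤ × ℤ) (_ : E ⊆ ⋃ i, dyadicSquare (c i).1 (c i).2.1 (c i).2.2),
    ∑' i, ENNReal.ofReal ((2 : ℝ) ^ (-(c i).1))

/-- `ν` is `h`-dissectible: the dyadic 1-Hausdorff content of `G_s(ν)` tends to `0`
as `s → 0⁺`. -/
def HDissectible (ν : Measure ℂ) (h : ℝ → ℝ) : Prop :=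
  Tendsto (fun s => dyadicContent (Gset ν h s)) (𝓝[>] (0 : ℝ)) (𝓝 0)

/-- `ν` is dissectible: `h`-dissectible for some scale function `h`. -/
def Dissectible (ν : Measure ℂ) : Prop :=
  ∃ h : ℝ → ℝ, IsScaleFunction h ∧ HDissectible ν h

/-- The closed support of a measure on `ℂ`. -/
def msupport (ν : Measure ℂ) : Set ℂ := {z : ℂ | ∀ r > 0, 0 < ν (ball z r)}

/-- The derived set (set of accumulation points) of a set. -/
def derivSet (S : Set ℂ) : Set ℂ := {z : ℂ | z ∈ closure (S \ {z})}

/-- The perturbation matrix `Ψ(λ) = I + (∫ conj(vᵢ) uⱼ (w-λ)⁻¹ dμ)ᵢⱼ`. -/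
def perturbMatrix (μ : Measure ℂ) {m : ℕ} (u v : Fin m → ℂ → ℂ) (lam : ℂ) :
    Matrix (Fin m) (Fin m) ℂ :=
  1 + Matrix.of fun i j => ∫ w, (starRingEnd ℂ) (v i w) * u j w * (w - lam)⁻¹ ∂μ

/-- The perturbation determinant `ψ = det Ψ`. -/
def perturbDet (μ : Measure ℂ) {m : ℕ} (u v : Fin m → ℂ → ℂ) (lam : ℂ) : ℂ :=
  (perturbMatrix μ u v lam).det

/-- The operator norm of a matrix, acting on the Euclidean space `ℂᵐ`. -/
def matOpNorm {m : ℕ} (M : Matrix (Fin m) (Fin m) ℂ) : ℝ :=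
  ‖Matrix.toEuclideanCLM (𝕜 := ℂ) M‖

open scoped Classical in
/-- `ψ̃(z) = ‖Ψ(z)⁻¹‖⁻¹` if `Ψ(z)` is invertible, and `0` otherwise. -/
def psiTilde (μ : Measure ℂ) {m : ℕ} (u v : Fin m → ℂ → ℂ) (z : ℂ) : ℝ :=
  if IsUnit (perturbMatrix μ u v z) then (matOpNorm (perturbMatrix μ u v z)⁻¹)⁻¹ else 0

/-- `T = N + Σⱼ uⱼ ⟨·, vⱼ⟩` on `L²(μ)`, where `N` is multiplication by the variable. -/
def IsPerturbedOp (μ : Measure ℂ) {m : ℕ} (u v : Fin m → ℂ → ℂ)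
    (T : Lp ℂ 2 μ →L[ℂ] Lp ℂ 2 μ) : Prop :=
  ∀ f : Lp ℂ 2 μ, (T f : ℂ → ℂ) =ᵐ[μ]
    fun z => z * f z + ∑ j, (∫ w, f w * (starRingEnd ℂ) (v j w) ∂μ) * u j z

/-- The spectrum of the restriction of `T` to an invariant subspace `p`. -/
def restrictedSpectrum {X : Type*} [NormedAddCommGroup X] [NormedSpace ℂ X]
    (T : X →L[ℂ] X) (p : Submodule ℂ X) (hp : ∀ x ∈ p, T x ∈ p) : Set ℂ :=
  spectrum ℂ ((T : X →ₗ[ℂ] X).restrict hp)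

/-- A Jordan curve: a homeomorphic image of the unit circle. -/
def IsJordanCurve (γ : Set ℂ) : Prop :=
  ∃ f : (sphere (0 : ℂ) 1) → ℂ, Continuous f ∧ Function.Injective f ∧ range f = γ

/-- A piecewise `C¹` smooth Jordan curve. -/
def IsPiecewiseC1JordanCurve (γ : Set ℂ) : Prop :=
  IsJordanCurve γ ∧
  ∃ f : ℝ → ℂ, Continuous f ∧ Function.Periodic f 1 ∧ InjOn f (Ico (0 : ℝ) 1) ∧
    f '' Ico (0 : ℝ) 1 = γ ∧
    ∃ (N : ℕ) (t : ℕ → ℝ), 0 < N ∧ t 0 = 0 ∧ t N = 1 ∧ (∀ i < N, t i < t (i + 1)) ∧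
      ∀ i < N, ContDiffOn ℝ 1 f (Icc (t i) (t (i + 1)))

/-- Relative boundary `∂(A; B)` of `A` inside `B` (for `A ⊆ B`): the frontier of `A` in the
subspace topology of `B`. -/
def relBoundary (A B : Set ℂ) : Set ℂ := B ∩ closure A ∩ closure (B \ A)

/-- Admissibility of a Jordan curve `γ` with respect to the measures `μ` (for the location
condition on `G_s(μ)`) and `ν` (for Carleson constants), and the scale function `h`. -/
def AdmissibleCurve (μ ν : Measure ℂ) (h : ℝ → ℝ) (γ : Set ℂ) : Prop :=
  IsPiecewiseC1JordanCurve γ ∧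
  ∀ z₀ ∉ γ, ∃ s > (0 : ℝ), ∃ Om : ℕ → Set ℂ,
    Monotone Om ∧ (⋃ n, Om n) = connectedComponentIn γᶜ z₀ ∧
    (∀ n, IsOpen (Om n) ∧ IsConnected (Om n) ∧ IsJordanCurve (frontier (Om n)) ∧
      μH[1] (frontier (Om n)) < ⊤) ∧
    γ ∩ Gset μ h s = ∅ ∧ (∀ n, frontier (Om n) ∩ Gset μ h s = ∅) ∧
    (∃ K : ℝ, ∀ (n : ℕ) (z : ℂ) (r : ℝ), 0 < r →
      μH[1] (frontier (Om n) ∩ ball z r) ≤ ENNReal.ofReal (K * r)) ∧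
    (∃ M : ℝ, ∀ n : ℕ, ∀ z ∈ frontier (Om n), ∀ r : ℝ, 0 < r →
      (ν (ball z r)).toReal ≤ M * r)

/-- An admissible Jordan domain. -/
def AdmissibleJordanDomain (μ ν : Measure ℂ) (h : ℝ → ℝ) (Ω : Set ℂ) : Prop :=
  IsOpen Ω ∧ IsConnected Ω ∧ Bornology.IsBounded Ω ∧ AdmissibleCurve μ ν h (frontier Ω)

/-- Bishop's property (β) for an operator on `L²(μ)`. -/
def HasBishopBeta (μ : Measure ℂ) (T : Lp ℂ 2 μ →L[ℂ] Lp ℂ 2 μ) : Prop :=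
  ∀ U : Set ℂ, IsOpen U → ∀ F : ℕ → ℂ → Lp ℂ 2 μ,
    (∀ n, DifferentiableOn ℂ (F n) U) →
    (∀ K : Set ℂ, K ⊆ U → IsCompact K →
      TendstoUniformlyOn (fun n lam => T (F n lam) - lam • F n lam) (fun _ => 0) atTop K) →
    ∀ K : Set ℂ, K ⊆ U → IsCompact K →
      TendstoUniformlyOn (fun n lam => F n lam) (fun _ => 0) atTop K

/-!
Choose `sᵢ > 0` so small that the contents of `G_{sᵢ}(μᵢ)` have a finite sum, and raise `hᵢ` by the
total mass of `μᵢ` beyond `sᵢ`. No square of side larger than `sᵢ` is then heavy for `μᵢ`, so the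
contents of the sets `G_r(μᵢ)` are dominated, uniformly in `r`, by a convergent series. A square
which is heavy for `Σ cᵢ μᵢ` and `Σ cᵢ hᵢ` is heavy for some `μᵢ` and `hᵢ`; countable subadditivity
of the content and dominated convergence therefore give dissectibility of the sum, as soon as the
`cᵢ` decrease fast enough for `Σ cᵢ hᵢ` to be a scale function.
-/

section Series

variable {ι : Type*} [Countable ι]

lemma exists_pos_forall_summable_mul {κ : Type*} [Countable κ] (a : ι → κ → ℝ) :
    ∃ c : ι → ℝ, (∀ i, 0 < c i) ∧ ∀ k, Summable fun i => c i * a i k := by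
  obtain ⟨e, he⟩ := exists_injective_nat ι
  obtain ⟨d, hd⟩ := exists_injective_nat κ
  obtain ⟨δ, hδ, _, hδsum, -⟩ := NNReal.exists_pos_sum_of_countable one_ne_zero ι
  -- For fixed `k`, the coefficient of `i` only has to beat `|a i k|` for all but finitely many `i`.
  have hbound (i : ι) : ∃ b : ℝ, ∀ k, d k ≤ e i → |a i k| ≤ b := by
    obtain ⟨b, hb⟩ := (((finite_Iic (e i)).preimage hd.injOn).image fun k => |a i k|).bddAbove
    exact ⟨b, fun k hk => hb (mem_image_of_mem _ hk)⟩
  choose b hb using hbound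
  have hpos (i : ι) : 0 < max 1 (b i) := zero_lt_one.trans_le (le_max_left _ _)
  refine ⟨fun i => δ i / max 1 (b i), fun i => div_pos (hδ i) (hpos i), fun k => ?_⟩
  refine (NNReal.summable_coe.2 hδsum.summable).of_norm_bounded_eventually ?_
  filter_upwards [he.tendsto_cofinite.eventually
    (Nat.cofinite_eq_atTop ▸ eventually_ge_atTop (d k))] with i hi
  calc ‖δ i / max 1 (b i) * a i k‖ = δ i * (|a i k| / max 1 (b i)) := by
        rw [norm_mul, Real.norm_eq_abs, Real.norm_eq_abs,
          abs_of_nonneg (div_nonneg (δ i).coe_nonneg (hpos i).le)]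
        ring
    _ ≤ δ i := mul_le_of_le_one_right (δ i).coe_nonneg
        (div_le_one_of_le₀ ((hb i k hi).trans (le_max_right _ _)) (hpos i).le)

lemma tendsto_ennreal_tsum_of_dominated_convergence {α : Type*} {l : Filter α}
    [l.IsCountablyGenerated] {f : α → ι → ℝ≥0∞} {g bound : ι → ℝ≥0∞}
    (hbound : ∑' i, bound i ≠ ⊤) (hle : ∀ᶠ x in l, ∀ i, f x i ≤ bound i)
    (hlim : ∀ i, Tendsto (fun x => f x i) l (𝓝 (g i))) :
    Tendsto (fun x => ∑' i, f x i) l (𝓝 (∑' i, g i)) := by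
  let _ : MeasurableSpace ι := ⊤
  simp only [← lintegral_count] at hbound ⊢
  exact tendsto_lintegral_filter_of_dominated_convergence bound
    (Eventually.of_forall fun _ => measurable_of_countable _)
    (hle.mono fun _ hx => Eventually.of_forall hx) hbound (Eventually.of_forall hlim)

lemma integrable_tsum_of_summable_integral_norm {α : Type*} [MeasurableSpace α] {μ : Measure α}
    {f : ι → α → ℝ} (hf : ∀ i, Integrable (f i) μ) (hsum : Summable fun i => ∫ x, ‖f i x‖ ∂μ) :
    Integrable (fun x => ∑' i, f i x) μ := by
  refine ⟨(AEMeasurable.tsum fun i => (hf i).1.aemeasurable).aestronglyMeasurable, ?_⟩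
  calc ∫⁻ x, ‖∑' i, f i x‖ₑ ∂μ
      ≤ ∫⁻ x, ∑' i, ‖f i x‖ₑ ∂μ := lintegral_mono fun x => enorm_tsum_le_tsum_enorm
    _ = ∑' i, ∫⁻ x, ‖f i x‖ₑ ∂μ := lintegral_tsum fun i => (hf i).1.enorm
    _ = ∑' i, ENNReal.ofReal (∫ x, ‖f i x‖ ∂μ) :=
        tsum_congr fun i => (ofReal_integral_norm_eq_lintegral_enorm (hf i)).symm
    _ < ⊤ := hsum.tsum_ofReal_lt_top

lemma isFiniteMeasure_sum_ofReal_smul {α : Type*} [MeasurableSpace α] {μ : ι → Measure α}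
    [∀ i, IsFiniteMeasure (μ i)] {c : ι → ℝ} (hc : ∀ i, 0 ≤ c i)
    (hsum : Summable fun i => c i * (μ i).real univ) :
    IsFiniteMeasure (Measure.sum fun i => ENNReal.ofReal (c i) • μ i) := by
  refine ⟨?_⟩
  calc (Measure.sum fun i => ENNReal.ofReal (c i) • μ i) univ
      = ∑' i, ENNReal.ofReal (c i * (μ i).real univ) := by
        rw [Measure.sum_apply_of_countable]
        refine tsum_congr fun i => ?_
        rw [Measure.smul_apply, smul_eq_mul, ENNReal.ofReal_mul (hc i), ofReal_measureReal]
    _ < ⊤ := hsum.tsum_ofReal_lt_top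

end Series

section DyadicContent

lemma dyadicContent_mono {E F : Set ℂ} (hEF : E ⊆ F) : dyadicContent E ≤ dyadicContent F :=
  le_iInf₂ fun c hc => iInf₂_le c (hEF.trans hc)

lemma dyadicContent_le_tsum {κ : Type*} [Countable κ] [Infinite κ] {E : Set ℂ}
    (c : κ → ℤ × ℤ × ℤ) (hE : E ⊆ ⋃ j, dyadicSquare (c j).1 (c j).2.1 (c j).2.2) :
    dyadicContent E ≤ ∑' j, ENNReal.ofReal ((2 : ℝ) ^ (-(c j).1)) := by
  obtain ⟨e⟩ := nonempty_equiv_of_countable (α := ℕ) (β := κ)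
  rw [← e.tsum_eq]
  refine iInf₂_le (c ∘ e) (hE.trans_eq ?_)
  exact (e.surjective.iUnion_comp fun j => dyadicSquare (c j).1 (c j).2.1 (c j).2.2).symm

lemma exists_cover_tsum_lt {E : Set ℂ} {a : ℝ≥0∞} (ha : dyadicContent E < a) :
    ∃ c : ℕ → ℤ × ℤ × ℤ, E ⊆ ⋃ j, dyadicSquare (c j).1 (c j).2.1 (c j).2.2 ∧
      ∑' j, ENNReal.ofReal ((2 : ℝ) ^ (-(c j).1)) < a := by
  simpa only [dyadicContent, iInf_lt_iff, exists_prop] using ha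

lemma dyadicContent_iUnion_le {ι : Type*} [Countable ι] [Nonempty ι] (E : ι → Set ℂ) :
    dyadicContent (⋃ i, E i) ≤ ∑' i, dyadicContent (E i) := by
  refine ENNReal.le_of_forall_pos_le_add fun ε hε hfin => ?_
  obtain ⟨δ, hδ, hδε⟩ := ENNReal.exists_pos_sum_of_countable' (ENNReal.coe_pos.2 hε).ne' ι
  choose c hcover hc using fun i => exists_cover_tsum_lt
    (ENNReal.lt_add_right (ENNReal.ne_top_of_tsum_ne_top hfin.ne i) (hδ i).ne')
  calc dyadicContent (⋃ i, E i)
      ≤ ∑' p : ι × ℕ, ENNReal.ofReal ((2 : ℝ) ^ (-(c p.1 p.2).1)) := by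
        refine dyadicContent_le_tsum (fun p : ι × ℕ => c p.1 p.2) ?_
        rw [iUnion_prod']
        exact iUnion_mono hcover
    _ = ∑' i, ∑' j, ENNReal.ofReal ((2 : ℝ) ^ (-(c i j).1)) :=
        ENNReal.tsum_prod (f := fun i j => ENNReal.ofReal ((2 : ℝ) ^ (-(c i j).1)))
    _ ≤ ∑' i, (dyadicContent (E i) + δ i) := ENNReal.tsum_le_tsum fun i => (hc i).le
    _ = ∑' i, dyadicContent (E i) + ∑' i, δ i := ENNReal.tsum_add
    _ ≤ ∑' i, dyadicContent (E i) + ε := by gcongr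

end DyadicContent

/-- The function `h` increased by the constant `M` on `(s, ∞)`. With `M` the total mass of a
measure, this makes all squares of side larger than `s` light and leaves the smaller ones as they
were. -/
def raiseAbove (h : ℝ → ℝ) (s M : ℝ) : ℝ → ℝ :=
  fun t => h t + (Ioi s).indicator (fun _ => M) t

lemma raiseAbove_of_lt {h : ℝ → ℝ} {s t : ℝ} (M : ℝ) (hst : s < t) :
    raiseAbove h s M t = h t + M := by
  rw [raiseAbove, indicator_of_mem (mem_Ioi.2 hst)]

lemma raiseAbove_of_le {h : ℝ → ℝ} {s t : ℝ} (M : ℝ) (hts : t ≤ s) :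
    raiseAbove h s M t = h t := by
  rw [raiseAbove, indicator_of_notMem (notMem_Ioi.2 hts), add_zero]

lemma le_raiseAbove (h : ℝ → ℝ) (s : ℝ) {M : ℝ} (hM : 0 ≤ M) (t : ℝ) :
    h t ≤ raiseAbove h s M t :=
  le_add_of_nonneg_right (indicator_nonneg (fun _ _ => hM) t)

section ScaleFunction

lemma integrableOn_indicator_Ioi_div_sq {s : ℝ} (hs : 0 < s) (M : ℝ) :
    IntegrableOn (fun t => (Ioi s).indicator (fun _ => M) t / t ^ 2) (Ioc 0 1) := by
  refine Measure.integrableOn_of_bounded (M := |M| / s ^ 2) (by simp)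
    (((measurable_const.indicator measurableSet_Ioi).div
      (measurable_id.pow_const 2)).aestronglyMeasurable) (Eventually.of_forall fun t => ?_)
  rcases lt_or_ge s t with hst | hts
  · rw [indicator_of_mem (mem_Ioi.2 hst), norm_div, Real.norm_eq_abs, norm_pow,
      Real.norm_of_nonneg (hs.trans hst).le]
    gcongr
  · rw [indicator_of_notMem (notMem_Ioi.2 hts), zero_div, norm_zero]
    positivity

lemma isScaleFunction_raiseAbove {h : ℝ → ℝ} (hh : IsScaleFunction h) {s M : ℝ} (hs : 0 < s)
    (hM : 0 ≤ M) : IsScaleFunction (raiseAbove h s M) where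
  nonneg t ht := (hh.nonneg t ht).trans (le_raiseAbove h s hM t)
  mono a b ha hab := by
    rcases lt_or_ge s a with hsa | has
    · rw [raiseAbove_of_lt M hsa, raiseAbove_of_lt M (hsa.trans_le hab)]
      exact add_le_add_left (hh.mono ha hab) M
    · rw [raiseAbove_of_le M has]
      exact (hh.mono ha hab).trans (le_raiseAbove h s hM b)
  pos t ht := (hh.pos t ht).trans_le (le_raiseAbove h s hM t)
  tendsto_atTop := tendsto_atTop_mono (le_raiseAbove h s hM) hh.tendsto_atTop
  integrable := by
    simp only [raiseAbove, add_div]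
    exact hh.integrable.add (integrableOn_indicator_Ioi_div_sq hs M)

lemma IsScaleFunction.const_mul {h : ℝ → ℝ} (hh : IsScaleFunction h) {c : ℝ} (hc : 0 < c) :
    IsScaleFunction fun t => c * h t where
  nonneg t ht := mul_nonneg hc.le (hh.nonneg t ht)
  mono _ _ hs hst := mul_le_mul_of_nonneg_left (hh.mono hs hst) hc.le
  pos t ht := mul_pos hc (hh.pos t ht)
  tendsto_atTop := hh.tendsto_atTop.const_mul_atTop hc
  integrable := by
    simp only [mul_div_assoc]
    exact hh.integrable.const_mul c

variable {ι : Type*} [Countable ι] [Nonempty ι] {h : ι → ℝ → ℝ}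

lemma IsScaleFunction.tsum (hh : ∀ i, IsScaleFunction (h i))
    (hsum : ∀ t, 0 ≤ t → Summable fun i => h i t)
    (hint : Summable fun i => ∫ t in Ioc (0 : ℝ) 1, h i t / t ^ 2) :
    IsScaleFunction fun t => ∑' i, h i t := by
  obtain ⟨i₀⟩ := ‹Nonempty ι›
  have hle (t : ℝ) (ht : 0 ≤ t) : h i₀ t ≤ ∑' i, h i t :=
    (hsum t ht).le_tsum i₀ fun i _ => (hh i).nonneg t ht
  refine ⟨fun t ht => tsum_nonneg fun i => (hh i).nonneg t ht,
    fun s t hs hst => (hsum s hs).tsum_le_tsum (fun i => (hh i).mono hs hst)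
      (hsum t (hs.trans hst)),
    fun t ht => ((hh i₀).pos t ht).trans_le (hle t ht.le),
    tendsto_atTop_mono' atTop ((eventually_ge_atTop 0).mono hle) (hh i₀).tendsto_atTop, ?_⟩
  simp only [← tsum_div_const]
  refine integrable_tsum_of_summable_integral_norm (fun i => (hh i).integrable)
    (hint.congr fun i => setIntegral_congr_fun measurableSet_Ioc fun t ht => ?_)
  exact (Real.norm_of_nonneg (div_nonneg ((hh i).nonneg t ht.1.le) (sq_nonneg t))).symm

lemma IsScaleFunction.exists_pos_tsum_mul (hh : ∀ i, IsScaleFunction (h i)) (w : ι → ℝ) :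
    ∃ c : ι → ℝ, (∀ i, 0 < c i) ∧ (Summable fun i => c i * w i) ∧
      (∀ t, 0 ≤ t → Summable fun i => c i * h i t) ∧
      IsScaleFunction fun t => ∑' i, c i * h i t := by
  obtain ⟨c, hc, hsum⟩ := exists_pos_forall_summable_mul fun i =>
    Sum.elim ![w i, ∫ t in Ioc (0 : ℝ) 1, h i t / t ^ 2] fun n : ℕ => h i n
  have hpointwise (t : ℝ) (ht : 0 ≤ t) : Summable fun i => c i * h i t :=
    (hsum (.inr ⌈t⌉₊)).of_nonneg_of_le (fun i => mul_nonneg (hc i).le ((hh i).nonneg t ht))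
      fun i => mul_le_mul_of_nonneg_left ((hh i).mono ht (Nat.le_ceil t)) (hc i).le
  refine ⟨c, hc, hsum (.inl 0), hpointwise,
    .tsum (fun i => (hh i).const_mul (hc i)) hpointwise ?_⟩
  simp only [mul_div_assoc, integral_const_mul]
  exact hsum (.inl 1)

end ScaleFunction

section HeavySquares

variable {ν : Measure ℂ} {h : ℝ → ℝ} {k m n : ℤ}

lemma isHeavy_ofReal_smul_iff {c : ℝ} (hc : 0 < c) :
    IsHeavy (ENNReal.ofReal c • ν) (fun t => c * h t) k m n ↔ IsHeavy ν h k m n := by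
  rw [IsHeavy, IsHeavy, Measure.smul_apply, smul_eq_mul, ENNReal.ofReal_mul hc.le,
    ENNReal.mul_lt_mul_iff_right (ENNReal.ofReal_pos.2 hc).ne' ENNReal.ofReal_ne_top]

lemma IsHeavy.of_raiseAbove {s M : ℝ} (hh : ∀ t, 0 ≤ t → 0 ≤ h t)
    (hM : ν univ ≤ ENNReal.ofReal M) (hQ : IsHeavy ν (raiseAbove h s M) k m n) :
    IsHeavy ν h k m n ∧ (2 : ℝ) ^ (-k) ≤ s := by
  have hle : (2 : ℝ) ^ (-k) ≤ s := by
    by_contra! hlt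
    refine hQ.not_ge ?_
    calc ν (dyadicSquare k m n) ≤ ν univ := measure_mono (subset_univ _)
      _ ≤ ENNReal.ofReal M := hM
      _ ≤ ENNReal.ofReal (raiseAbove h s M (2 ^ (-k))) := by
        rw [raiseAbove_of_lt M hlt]
        exact ENNReal.ofReal_le_ofReal (le_add_of_nonneg_left (hh _ (by positivity)))
  rw [IsHeavy, raiseAbove_of_le M hle] at hQ
  exact ⟨hQ, hle⟩

lemma IsHeavy.exists_of_sum {ι : Type*} [Countable ι] {ν : ι → Measure ℂ} {h : ι → ℝ → ℝ}
    (hh : ∀ i t, 0 ≤ t → 0 ≤ h i t) (hsum : ∀ t, 0 ≤ t → Summable fun i => h i t)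
    (hQ : IsHeavy (Measure.sum ν) (fun t => ∑' i, h i t) k m n) :
    ∃ i, IsHeavy (ν i) (h i) k m n := by
  have hside : (0 : ℝ) ≤ 2 ^ (-k) := by positivity
  by_contra! hlight
  refine hQ.not_ge ?_
  rw [Measure.sum_apply_of_countable,
    ENNReal.ofReal_tsum_of_nonneg (fun i => hh i _ hside) (hsum _ hside)]
  exact ENNReal.tsum_le_tsum fun i => not_lt.1 (hlight i)

lemma Gset_mono (ν : Measure ℂ) (h : ℝ → ℝ) : Monotone (Gset ν h) := fun _ _ hst =>
  iUnion_mono fun _ => iUnion_mono' fun hQ => ⟨⟨hQ.1, hQ.2.trans hst⟩, Subset.rfl⟩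

lemma Gset_ofReal_smul {c : ℝ} (hc : 0 < c) (s : ℝ) :
    Gset (ENNReal.ofReal c • ν) (fun t => c * h t) s = Gset ν h s := by
  simp only [Gset, isHeavy_ofReal_smul_iff hc]

lemma Gset_raiseAbove_subset {s M : ℝ} (hh : ∀ t, 0 ≤ t → 0 ≤ h t)
    (hM : ν univ ≤ ENNReal.ofReal M) (r : ℝ) :
    Gset ν (raiseAbove h s M) r ⊆ Gset ν h (min r s) :=
  iUnion_mono fun _ => iUnion_mono' fun hQ =>
    have ⟨hheavy, hle⟩ := hQ.1.of_raiseAbove hh hM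
    ⟨⟨hheavy, le_min hQ.2 hle⟩, Subset.rfl⟩

lemma Gset_sum_subset_iUnion {ι : Type*} [Countable ι] {ν : ι → Measure ℂ} {h : ι → ℝ → ℝ}
    (hh : ∀ i t, 0 ≤ t → 0 ≤ h i t) (hsum : ∀ t, 0 ≤ t → Summable fun i => h i t) (r : ℝ) :
    Gset (Measure.sum ν) (fun t => ∑' i, h i t) r ⊆ ⋃ i, Gset (ν i) (h i) r :=
  iUnion₂_subset fun Q hQ =>
    have ⟨i, hi⟩ := hQ.1.exists_of_sum hh hsum
    subset_iUnion_of_subset i (subset_iUnion₂_of_subset Q ⟨hi, hQ.2⟩ Subset.rfl)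

end HeavySquares

section Dissectible

lemma Dissectible.exists_dyadicContent_Gset_le {ν : Measure ℂ} [IsFiniteMeasure ν]
    (hν : Dissectible ν) {ε : ℝ≥0∞} (hε : 0 < ε) :
    ∃ h, IsScaleFunction h ∧ HDissectible ν h ∧ ∀ r, dyadicContent (Gset ν h r) ≤ ε := by
  obtain ⟨h, hh, hdiss⟩ := hν
  obtain ⟨s, hs, hsε⟩ : ∃ s : ℝ, 0 < s ∧ dyadicContent (Gset ν h s) < ε :=
    (eventually_mem_nhdsWithin.and (hdiss.eventually_lt_const hε)).exists
  have hsub := Gset_raiseAbove_subset (s := s) hh.nonneg (ofReal_measureReal (μ := ν)).ge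
  refine ⟨raiseAbove h s (ν.real univ), isScaleFunction_raiseAbove hh hs measureReal_nonneg,
    ?_, fun r => ?_⟩
  · exact tendsto_of_tendsto_of_tendsto_of_le_of_le tendsto_const_nhds hdiss (fun _ => zero_le)
      fun r => dyadicContent_mono ((hsub r).trans (Gset_mono ν h (min_le_left r s)))
  · exact (dyadicContent_mono ((hsub r).trans (Gset_mono ν h (min_le_right r s)))).trans hsε.le

lemma HDissectible.ofReal_smul {ν : Measure ℂ} {h : ℝ → ℝ} (hν : HDissectible ν h) {c : ℝ}
    (hc : 0 < c) : HDissectible (ENNReal.ofReal c • ν) fun t => c * h t := by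
  simpa only [HDissectible, Gset_ofReal_smul hc] using hν

variable {ι : Type*} [Countable ι] [Nonempty ι]

lemma HDissectible.sum {ν : ι → Measure ℂ} {h : ι → ℝ → ℝ} {ε : ι → ℝ≥0∞}
    (hν : ∀ i, HDissectible (ν i) (h i)) (hh : ∀ i t, 0 ≤ t → 0 ≤ h i t)
    (hsum : ∀ t, 0 ≤ t → Summable fun i => h i t) (hε : ∑' i, ε i ≠ ⊤)
    (hle : ∀ i r, dyadicContent (Gset (ν i) (h i) r) ≤ ε i) :
    HDissectible (Measure.sum ν) fun t => ∑' i, h i t := by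
  have hlim : Tendsto (fun r => ∑' i, dyadicContent (Gset (ν i) (h i) r)) (𝓝[>] 0) (𝓝 0) := by
    simpa only [tsum_zero] using tendsto_ennreal_tsum_of_dominated_convergence hε
      (Eventually.of_forall fun r i => hle i r) hν
  exact tendsto_of_tendsto_of_tendsto_of_le_of_le tendsto_const_nhds hlim (fun _ => zero_le)
    fun r => (dyadicContent_mono (Gset_sum_subset_iUnion hh hsum r)).trans
      (dyadicContent_iUnion_le _)

theorem sum_of_dissectible_measures_general (μ : ι → Measure ℂ) [∀ i, IsFiniteMeasure (μ i)]
    (hμ : ∀ i, Dissectible (μ i)) :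
    ∃ c : ι → ℝ, (∀ i, 0 < c i) ∧
      IsFiniteMeasure (Measure.sum fun i => ENNReal.ofReal (c i) • μ i) ∧
      Dissectible (Measure.sum fun i => ENNReal.ofReal (c i) • μ i) := by
  obtain ⟨ε, hε, hεsum⟩ := ENNReal.exists_pos_sum_of_countable' one_ne_zero ι
  choose h hh hdiss hle using fun i => (hμ i).exists_dyadicContent_Gset_le (hε i)
  obtain ⟨c, hc, hmass, hsum, hscale⟩ :=
    IsScaleFunction.exists_pos_tsum_mul hh fun i => (μ i).real univ
  refine ⟨c, hc, isFiniteMeasure_sum_ofReal_smul (fun i => (hc i).le) hmass, _, hscale, ?_⟩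
  refine HDissectible.sum (fun i => (hdiss i).ofReal_smul (hc i))
    (fun i => ((hh i).const_mul (hc i)).nonneg) hsum hεsum.ne_top fun i r => ?_
  rw [Gset_ofReal_smul (hc i)]
  exact hle i r

end Dissectible

theorem sum_of_dissectible_measures
    (μs : ℕ → Measure ℂ) (hfin : ∀ k, IsFiniteMeasure (μs k))
    (hs : ℕ → ℝ → ℝ) (hscale : ∀ k, IsScaleFunction (hs k))
    (hdiss : ∀ k, HDissectible (μs k) (hs k))
    (hbdd : Bornology.IsBounded (⋃ k, msupport (μs k))) :
    ∃ c : ℕ → ℝ, (∀ k, 0 < c k) ∧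
      ∃ h : ℝ → ℝ, IsScaleFunction h ∧
        (Measure.sum fun k => ENNReal.ofReal (c k) • μs k) univ < ⊤ ∧
        HDissectible (Measure.sum fun k => ENNReal.ofReal (c k) • μs k) h := by
  obtain ⟨c, hc, hfinite, h, hh, hdissect⟩ :=
    sum_of_dissectible_measures_general μs fun k => ⟨hs k, hscale k, hdiss k⟩
  exact ⟨c, hc, h, hh, measure_lt_top _ _, hdissect⟩

end
end

section
/- Let ν be a finite positive Borel measure on ℂ with compact support that is h-dissectible for some scale function h. Then for Lebesgue-almost every x₀ ∈ ℝ there exist s > 0, a strictly increasing sequence (xₙ⁻) converging to x₀, and a strictly decreasing sequence (xₙ⁺) converging to x₀, such that x₀ and all the points xₙ⁻, xₙ⁺ belong to ℝ∖Re(G_s(ν)), where Re(E) = {Re z : z ∈ E}. The analogous statement holds with Im in place of Re. -/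
open MeasureTheory Filter Topology Metric Set Complex
open scoped ENNReal NNReal BigOperators

noncomputable section

/-!
A Lipschitz map to the line, such as a coordinate projection, sends a dyadic square to a set of
length comparable to the side of the square. The measure of the image of `G_s(ν)` is therefore
controlled by the dyadic content of `G_s(ν)`, which tends to `0` with `s`, so along a fixed sequence
`s → 0` almost every real lies outside one of these images. For each of these countably many `s`,
all but countably many points of the complement of the image are limits, from both sides, of points
of that complement.
-/

section OneSidedLimits

variable {X : Type*} [LinearOrder X] [TopologicalSpace X] [OrderTopology X]

theorem exists_seq_strictAnti_tendsto_of_mem_closure_inter_Ioi [FirstCountableTopology X]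
    {A : Set X} {x : X} (hx : x ∈ closure (A ∩ Ioi x)) :
    ∃ u : ℕ → X, StrictAnti u ∧ Tendsto u atTop (𝓝 x) ∧ ∀ n, u n ∈ A := by
  have hglb : IsGLB (A ∩ Ioi x) x := isGLB_of_mem_closure (fun _ hy => hy.2.le) hx
  obtain ⟨u, hu_anti, -, hu_lim, hu_mem⟩ := hglb.exists_seq_strictAnti_tendsto_of_notMem
    (fun hmem => lt_irrefl x hmem.2) (closure_nonempty_iff.1 ⟨x, hx⟩)
  exact ⟨u, hu_anti, hu_lim, fun n => (hu_mem n).1⟩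

theorem exists_seq_strictMono_tendsto_of_mem_closure_inter_Iio [FirstCountableTopology X]
    {A : Set X} {x : X} (hx : x ∈ closure (A ∩ Iio x)) :
    ∃ u : ℕ → X, StrictMono u ∧ Tendsto u atTop (𝓝 x) ∧ ∀ n, u n ∈ A := by
  have hlub : IsLUB (A ∩ Iio x) x := isLUB_of_mem_closure (fun _ hy => hy.2.le) hx
  obtain ⟨u, hu_mono, -, hu_lim, hu_mem⟩ := hlub.exists_seq_strictMono_tendsto_of_notMem
    (fun hmem => lt_irrefl x hmem.2) (closure_nonempty_iff.1 ⟨x, hx⟩)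
  exact ⟨u, hu_mono, hu_lim, fun n => (hu_mem n).1⟩

variable [SecondCountableTopology X] [MeasurableSpace X] (μ : Measure X) [NullSingletonClass μ]

theorem ae_mem_imp_mem_closure_inter_Ioi (A : Set X) :
    ∀ᵐ x ∂μ, x ∈ A → x ∈ closure (A ∩ Ioi x) := by
  filter_upwards [(countable_setOfPred_isolated_right_within (s := A)).ae_notMem μ] with x hx hxA
  exact mem_closure_iff_nhdsWithin_neBot.2 ⟨fun hbot => hx ⟨hxA, hbot⟩⟩

theorem ae_mem_imp_mem_closure_inter_Iio (A : Set X) :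
    ∀ᵐ x ∂μ, x ∈ A → x ∈ closure (A ∩ Iio x) := by
  filter_upwards [(countable_setOfPred_isolated_left_within (s := A)).ae_notMem μ] with x hx hxA
  exact mem_closure_iff_nhdsWithin_neBot.2 ⟨fun hbot => hx ⟨hxA, hbot⟩⟩

end OneSidedLimits

theorem ae_exists_notMem_of_tendsto_measure_zero {X ι : Type*} [MeasurableSpace X]
    {μ : Measure X} {l : Filter ι} [l.NeBot] {E : ι → Set X}
    (hE : Tendsto (fun i => μ (E i)) l (𝓝 0)) : ∀ᵐ x ∂μ, ∃ i, x ∉ E i := by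
  have hnull : μ (⋂ i, E i) = 0 :=
    le_antisymm (ge_of_tendsto' hE fun i => measure_mono (iInter_subset E i)) zero_le
  simpa only [mem_iInter, not_forall] using measure_eq_zero_iff_ae_notMem.1 hnull

theorem ediam_dyadicSquare_le (k m n : ℤ) :
    ediam (dyadicSquare k m n) ≤ 2 * ENNReal.ofReal (2 ^ (-k)) := by
  refine ediam_le fun z hz w hw => ?_
  obtain ⟨hz_re, hz_re', hz_im, hz_im'⟩ := hz
  obtain ⟨hw_re, hw_re', hw_im, hw_im'⟩ := hw
  have hre : |(z - w).re| ≤ 2 ^ (-k) := by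
    rw [sub_re, abs_sub_le_iff]; constructor <;> linarith
  have him : |(z - w).im| ≤ 2 ^ (-k) := by
    rw [sub_im, abs_sub_le_iff]; constructor <;> linarith
  have hdist : dist z w ≤ 2 * 2 ^ (-k) := by
    rw [dist_eq_norm]
    linarith [norm_le_abs_re_add_abs_im (z - w)]
  calc edist z w = ENNReal.ofReal (dist z w) := edist_dist z w
    _ ≤ ENNReal.ofReal (2 * 2 ^ (-k)) := ENNReal.ofReal_le_ofReal hdist
    _ = 2 * ENNReal.ofReal (2 ^ (-k)) := by
      rw [ENNReal.ofReal_mul zero_le_two, ENNReal.ofReal_ofNat]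

theorem volume_image_le_mul_ediam {X : Type*} [PseudoEMetricSpace X] {K : ℝ≥0} {p : X → ℝ}
    (hp : LipschitzWith K p) (E : Set X) : volume (p '' E) ≤ K * ediam E :=
  (Real.volume_le_diam _).trans (hp.ediam_image_le E)

section LipschitzImages

variable {K : ℝ≥0} {p : ℂ → ℝ}

theorem volume_image_le_mul_dyadicContent (hp : LipschitzWith K p) (E : Set ℂ) :
    volume (p '' E) ≤ 2 * K * dyadicContent E := by
  -- `2 * K` passes through the infimum only if `K ≠ 0`: an empty `⨅` is `∞`, and `0 * ∞ = 0`.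
  obtain rfl | hK := eq_or_ne K 0
  · simpa only [ENNReal.coe_zero, mul_zero, zero_mul] using volume_image_le_mul_ediam hp E
  have hC_ne_zero : (2 * K : ℝ≥0∞) ≠ 0 := mul_ne_zero two_ne_zero (ENNReal.coe_ne_zero.2 hK)
  have hC_ne_top : (2 * K : ℝ≥0∞) ≠ ∞ := by finiteness
  simp only [dyadicContent, ENNReal.mul_iInf_of_ne hC_ne_zero hC_ne_top]
  refine le_iInf₂ fun c hc => ?_
  calc volume (p '' E)
      ≤ volume (⋃ i, p '' dyadicSquare (c i).1 (c i).2.1 (c i).2.2) :=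
        measure_mono ((image_mono hc).trans image_iUnion.subset)
    _ ≤ ∑' i, volume (p '' dyadicSquare (c i).1 (c i).2.1 (c i).2.2) := measure_iUnion_le _
    _ ≤ ∑' i, K * (2 * ENNReal.ofReal (2 ^ (-(c i).1))) := by
        gcongr with i
        exact (volume_image_le_mul_ediam hp _).trans (by grw [ediam_dyadicSquare_le])
    _ = 2 * K * ∑' i, ENNReal.ofReal (2 ^ (-(c i).1)) := by
        rw [ENNReal.tsum_mul_left, ENNReal.tsum_mul_left, mul_left_comm, mul_assoc]

theorem tendsto_volume_image_of_tendsto_dyadicContent (hp : LipschitzWith K p) {ι : Type*}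
    {l : Filter ι} {E : ι → Set ℂ} (hE : Tendsto (fun i => dyadicContent (E i)) l (𝓝 0)) :
    Tendsto (fun i => volume (p '' E i)) l (𝓝 0) := by
  have hC_ne_top : (2 * K : ℝ≥0∞) ≠ ∞ := by finiteness
  have hbound : Tendsto (fun i => 2 * K * dyadicContent (E i)) l (𝓝 0) := by
    simpa only [mul_zero] using ENNReal.Tendsto.const_mul hE (Or.inr hC_ne_top)
  exact tendsto_of_tendsto_of_tendsto_of_le_of_le tendsto_const_nhds hbound
    (fun _ => zero_le) fun i => volume_image_le_mul_dyadicContent hp (E i)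

end LipschitzImages

theorem ae_approximable_outside_projections_general {ν : Measure ℂ} {h : ℝ → ℝ}
    (hdiss : HDissectible ν h) {K : ℝ≥0} {p : ℂ → ℝ} (hp : LipschitzWith K p) :
    ∀ᵐ x₀ ∂(volume : Measure ℝ), ∃ s > (0 : ℝ), ∃ xm xp : ℕ → ℝ,
      StrictMono xm ∧ StrictAnti xp ∧
      Tendsto xm atTop (𝓝 x₀) ∧ Tendsto xp atTop (𝓝 x₀) ∧
      x₀ ∉ p '' Gset ν h s ∧
      ∀ n, xm n ∉ p '' Gset ν h s ∧ xp n ∉ p '' Gset ν h s := by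
  obtain ⟨s, -, hs_pos, hs_lim⟩ := exists_seq_strictAnti_tendsto_nhdsWithin (0 : ℝ)
  have hlim : Tendsto (fun i => volume (p '' Gset ν h (s i))) atTop (𝓝 0) :=
    tendsto_volume_image_of_tendsto_dyadicContent hp (hdiss.comp hs_lim)
  have hleft := ae_all_iff.2 fun i =>
    ae_mem_imp_mem_closure_inter_Iio volume (p '' Gset ν h (s i))ᶜ
  have hright := ae_all_iff.2 fun i =>
    ae_mem_imp_mem_closure_inter_Ioi volume (p '' Gset ν h (s i))ᶜ
  filter_upwards [ae_exists_notMem_of_tendsto_measure_zero hlim, hleft, hright]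
    with x₀ ⟨i, hi⟩ hx_left hx_right
  obtain ⟨xm, hxm_mono, hxm_lim, hxm⟩ :=
    exists_seq_strictMono_tendsto_of_mem_closure_inter_Iio (hx_left i hi)
  obtain ⟨xp, hxp_anti, hxp_lim, hxp⟩ :=
    exists_seq_strictAnti_tendsto_of_mem_closure_inter_Ioi (hx_right i hi)
  exact ⟨s i, hs_pos i, xm, xp, hxm_mono, hxp_anti, hxm_lim, hxp_lim, hi,
    fun n => ⟨hxm n, hxp n⟩⟩

theorem ae_approximable_outside_projections
    (ν : Measure ℂ) [IsFiniteMeasure ν] (hsupp : ∃ K : Set ℂ, IsCompact K ∧ ν Kᶜ = 0)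
    (h : ℝ → ℝ) (hscale : IsScaleFunction h) (hdiss : HDissectible ν h) :
    (∀ᵐ x₀ ∂(volume : Measure ℝ), ∃ s > (0 : ℝ), ∃ xm xp : ℕ → ℝ,
      StrictMono xm ∧ StrictAnti xp ∧
      Tendsto xm atTop (𝓝 x₀) ∧ Tendsto xp atTop (𝓝 x₀) ∧
      x₀ ∉ Complex.re '' Gset ν h s ∧
      ∀ n, xm n ∉ Complex.re '' Gset ν h s ∧ xp n ∉ Complex.re '' Gset ν h s) ∧
    (∀ᵐ y₀ ∂(volume : Measure ℝ), ∃ s > (0 : ℝ), ∃ ym yp : ℕ → ℝ,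
      StrictMono ym ∧ StrictAnti yp ∧
      Tendsto ym atTop (𝓝 y₀) ∧ Tendsto yp atTop (𝓝 y₀) ∧
      y₀ ∉ Complex.im '' Gset ν h s ∧
      ∀ n, ym n ∉ Complex.im '' Gset ν h s ∧ yp n ∉ Complex.im '' Gset ν h s) :=
  ⟨ae_approximable_outside_projections_general hdiss RCLike.lipschitzWith_re,
    ae_approximable_outside_projections_general hdiss RCLike.lipschitzWith_im⟩

end
end

section
/- Let ν be a finite positive Borel measure on ℂ and h a scale function. Then for every s > 0 there is a constant M such that ν(B(z,r)) ≤ M·r for every z ∈ ℂ∖G_s(ν) and every r > 0, where B(z,r) denotes the open disc of radius r centered at z; that is, the Carleson constant of the set ℂ∖G_s(ν) with respect to ν is finite. -/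
open MeasureTheory Filter Topology Metric Set Complex
open scoped ENNReal NNReal BigOperators

noncomputable section

/-!
Since `h` is monotone, `h t / (4 t)` is at most the integral of `h u / u ^ 2` over `(t, 2t]`, so
integrability forces `h t = O(t)` as `t → 0⁺`. A disc of small radius `r` around `z` is covered by
nine dyadic squares of side comparable to `r`, each of which contains `z` in its tenfold dilation.
If `z ∉ G_s(ν)` all nine are light, and the mass of the disc is at most a multiple of `h`
at scale `r`, hence of `r`. For the other radii the total mass of `ν` suffices.
-/

theorem le_setIntegral_div_pow_mul_pow {f : ℝ → ℝ} {a t : ℝ} {n : ℕ}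
    (hf_nonneg : ∀ u ∈ Ioc 0 a, 0 ≤ f u) (hf_mono : MonotoneOn f (Ioc 0 a))
    (hf_int : IntegrableOn (fun u => f u / u ^ (n + 1)) (Ioc 0 a)) (ht : 0 < t)
    (hta : 2 * t ≤ a) :
    f t ≤ (2 ^ (n + 1) * ∫ u in Ioc 0 a, f u / u ^ (n + 1)) * t ^ n := by
  have hsub : Ioc t (2 * t) ⊆ Ioc 0 a := Ioc_subset_Ioc ht.le hta
  have ht_mem : t ∈ Ioc 0 a := ⟨ht, by linarith⟩
  have integrand_ge : ∀ u ∈ Ioc t (2 * t), f t / (2 * t) ^ (n + 1) ≤ f u / u ^ (n + 1) :=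
    fun u hu => div_le_div₀ (hf_nonneg u (hsub hu)) (hf_mono ht_mem (hsub hu) hu.1.le)
      (pow_pos (ht.trans hu.1) _) (pow_le_pow_left₀ (ht.trans hu.1).le hu.2 _)
  have integrand_nonneg : ∀ u ∈ Ioc 0 a, 0 ≤ f u / u ^ (n + 1) := fun u hu =>
    div_nonneg (hf_nonneg u hu) (pow_nonneg hu.1.le _)
  have le_integral : t * (f t / (2 * t) ^ (n + 1)) ≤ ∫ u in Ioc 0 a, f u / u ^ (n + 1) :=
    calc t * (f t / (2 * t) ^ (n + 1))
        = ∫ _ in Ioc t (2 * t), f t / (2 * t) ^ (n + 1) := by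
          rw [setIntegral_const, Real.volume_real_Ioc_of_le (by linarith), smul_eq_mul]
          ring
      _ ≤ ∫ u in Ioc t (2 * t), f u / u ^ (n + 1) :=
          setIntegral_mono_on (by simp) (hf_int.mono_set hsub) measurableSet_Ioc integrand_ge
      _ ≤ ∫ u in Ioc 0 a, f u / u ^ (n + 1) :=
          setIntegral_mono_set hf_int (ae_restrict_of_forall_mem measurableSet_Ioc integrand_nonneg)
            hsub.eventuallyLE
  calc f t = (2 ^ (n + 1) * (t * (f t / (2 * t) ^ (n + 1)))) * t ^ n := by
        field_simp
        ring
    _ ≤ (2 ^ (n + 1) * ∫ u in Ioc 0 a, f u / u ^ (n + 1)) * t ^ n := by gcongr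

theorem isBigO_pow_of_integrableOn_div_pow {f : ℝ → ℝ} {a : ℝ} {n : ℕ} (ha : 0 < a)
    (hf_nonneg : ∀ u ∈ Ioc 0 a, 0 ≤ f u) (hf_mono : MonotoneOn f (Ioc 0 a))
    (hf_int : IntegrableOn (fun u => f u / u ^ (n + 1)) (Ioc 0 a)) :
    f =O[𝓝[>] 0] fun t => t ^ n := by
  refine .of_bound (2 ^ (n + 1) * ∫ u in Ioc 0 a, f u / u ^ (n + 1)) ?_
  filter_upwards [Ioc_mem_nhdsGT (half_pos ha)] with t ⟨ht, hta⟩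
  rw [Real.norm_of_nonneg (hf_nonneg t ⟨ht, by linarith⟩), Real.norm_of_nonneg (by positivity)]
  exact le_setIntegral_div_pow_mul_pow hf_nonneg hf_mono hf_int ht (by linarith)

theorem IsScaleFunction.isBigO_id {h : ℝ → ℝ} (hscale : IsScaleFunction h) :
    h =O[𝓝[>] 0] fun t => t := by
  simpa only [pow_one] using isBigO_pow_of_integrableOn_div_pow (n := 1) one_pos
    (fun u hu => hscale.nonneg u hu.1.le) (fun _ hu _ _ huv => hscale.mono hu.1.le huv)
    hscale.integrable

theorem floor_mem_Icc_of_abs_sub_le_one {R : Type*} [Ring R] [LinearOrder R]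
    [IsStrictOrderedRing R] [FloorRing R] {x y : R} (hxy : |y - x| ≤ 1) :
    ⌊y⌋ ∈ Finset.Icc (⌊x⌋ - 1) (⌊x⌋ + 1) := by
  obtain ⟨hupper, hlower⟩ := abs_sub_le_iff.1 hxy
  rw [Finset.mem_Icc, ← Int.floor_sub_one, ← Int.floor_add_one]
  exact ⟨Int.floor_mono (sub_le_comm.1 hlower), Int.floor_mono (sub_le_iff_le_add'.1 hupper)⟩

theorem abs_sub_add_half_le_of_mem_Icc_floor {K : Type*} [Field K] [LinearOrder K]
    [IsStrictOrderedRing K] [FloorRing K] {x : K} {m : ℤ}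
    (hm : m ∈ Finset.Icc (⌊x⌋ - 1) (⌊x⌋ + 1)) : |x - (m + 1 / 2)| ≤ 3 / 2 := by
  obtain ⟨hlower, hupper⟩ := Finset.mem_Icc.1 hm
  have hlower' : (⌊x⌋ : K) - 1 ≤ m := by exact_mod_cast hlower
  have hupper' : (m : K) ≤ ⌊x⌋ + 1 := by exact_mod_cast hupper
  have hfloor_le : (⌊x⌋ : K) ≤ x := Int.floor_le x
  have hlt_floor : x < ⌊x⌋ + 1 := Int.lt_floor_add_one x
  rw [abs_le]
  constructor <;> linarith

theorem mem_dyadicSquare_iff_floor {z : ℂ} {k m n : ℤ} :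
    z ∈ dyadicSquare k m n ↔ ⌊z.re / 2 ^ (-k)⌋ = m ∧ ⌊z.im / 2 ^ (-k)⌋ = n := by
  have hside : (0 : ℝ) < 2 ^ (-k) := by positivity
  simp only [dyadicSquare, mem_ofPred_eq, Int.floor_eq_iff, le_div_iff₀ hside, div_lt_iff₀ hside,
    and_assoc]

theorem mem_dilatedSquare_iff_abs_div_sub_lt {z : ℂ} {k m n : ℤ} :
    z ∈ dilatedSquare k m n ↔
      |z.re / 2 ^ (-k) - (m + 1 / 2)| < 5 ∧ |z.im / 2 ^ (-k) - (n + 1 / 2)| < 5 := by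
  have hside : (0 : ℝ) < 2 ^ (-k) := by positivity
  have rescale (x c : ℝ) : |x - c * 2 ^ (-k)| < 5 * 2 ^ (-k) ↔ |x / 2 ^ (-k) - c| < 5 := by
    rw [← div_lt_iff₀ hside, ← abs_of_pos hside, ← abs_div, abs_of_pos hside, sub_div,
      mul_div_cancel_right₀ c hside.ne']
  simp only [dilatedSquare, mem_ofPred_eq, rescale]

/-- The positions `(m, n)` of the dyadic square of generation `k` containing `z` and of its eight
neighbours. -/
def dyadicNeighbors (k : ℤ) (z : ℂ) : Finset (ℤ × ℤ) :=
  Finset.Icc (⌊z.re / 2 ^ (-k)⌋ - 1) (⌊z.re / 2 ^ (-k)⌋ + 1) ×ˢ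
    Finset.Icc (⌊z.im / 2 ^ (-k)⌋ - 1) (⌊z.im / 2 ^ (-k)⌋ + 1)

theorem card_dyadicNeighbors (k : ℤ) (z : ℂ) : (dyadicNeighbors k z).card = 9 := by
  have card_Icc (a : ℤ) : (Finset.Icc (a - 1) (a + 1)).card = 3 := by
    rw [Int.card_Icc]
    lia
  rw [dyadicNeighbors, Finset.card_product, card_Icc, card_Icc]

theorem closedBall_subset_biUnion_dyadicNeighbors (k : ℤ) (z : ℂ) :
    closedBall z (2 ^ (-k)) ⊆ ⋃ p ∈ dyadicNeighbors k z, dyadicSquare k p.1 p.2 := by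
  intro w hw
  have hside : (0 : ℝ) < 2 ^ (-k) := by positivity
  have hwz : ‖w - z‖ ≤ 2 ^ (-k) := mem_closedBall_iff_norm.1 hw
  have rescale {x y : ℝ} (hxy : |y - x| ≤ 2 ^ (-k)) : |y / 2 ^ (-k) - x / 2 ^ (-k)| ≤ 1 := by
    rwa [← sub_div, abs_div, abs_of_pos hside, div_le_one hside]
  exact mem_iUnion₂.2 ⟨(⌊w.re / 2 ^ (-k)⌋, ⌊w.im / 2 ^ (-k)⌋),
    Finset.mem_product.2
      ⟨floor_mem_Icc_of_abs_sub_le_one (rescale ((abs_re_le_norm (w - z)).trans hwz)),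
        floor_mem_Icc_of_abs_sub_le_one (rescale ((abs_im_le_norm (w - z)).trans hwz))⟩,
    mem_dyadicSquare_iff_floor.2 ⟨rfl, rfl⟩⟩

theorem mem_dilatedSquare_of_mem_dyadicNeighbors {k : ℤ} {z : ℂ} {p : ℤ × ℤ}
    (hp : p ∈ dyadicNeighbors k z) : z ∈ dilatedSquare k p.1 p.2 := by
  obtain ⟨hre, him⟩ := Finset.mem_product.1 hp
  exact mem_dilatedSquare_iff_abs_div_sub_lt.2
    ⟨(abs_sub_add_half_le_of_mem_Icc_floor hre).trans_lt (by norm_num),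
      (abs_sub_add_half_le_of_mem_Icc_floor him).trans_lt (by norm_num)⟩

theorem exists_zpow_neg_mem_Ico {K : Type*} [Field K] [LinearOrder K] [IsStrictOrderedRing K]
    [Archimedean K] {b r : K} (hb : 1 < b) (hr : 0 < r) : ∃ k : ℤ, b ^ (-k) ∈ Ico r (b * r) := by
  have hb_pos : 0 < b := one_pos.trans hb
  obtain ⟨n, hlt, hle⟩ := exists_mem_Ioc_zpow hr hb
  refine ⟨-(n + 1), ?_, ?_⟩ <;> rw [neg_neg]
  · exact hle
  · rw [zpow_add_one₀ hb_pos.ne', mul_comm]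
    gcongr

section Gset

variable {ν : Measure ℂ} {h : ℝ → ℝ} {s : ℝ} {z : ℂ}

theorem measure_dyadicSquare_le_of_notMem_Gset {k m n : ℤ} (hz : z ∉ Gset ν h s)
    (hk : (2 : ℝ) ^ (-k) ≤ s) (hzQ : z ∈ dilatedSquare k m n) :
    ν (dyadicSquare k m n) ≤ ENNReal.ofReal (h (2 ^ (-k))) :=
  not_lt.1 fun hheavy => hz (mem_iUnion₂.2 ⟨(k, m, n), ⟨hheavy, hk⟩, hzQ⟩)

theorem measure_closedBall_two_zpow_le_of_notMem_Gset {k : ℤ} (hz : z ∉ Gset ν h s)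
    (hk : (2 : ℝ) ^ (-k) ≤ s) :
    ν (closedBall z (2 ^ (-k))) ≤ 9 * ENNReal.ofReal (h (2 ^ (-k))) :=
  calc ν (closedBall z (2 ^ (-k)))
      ≤ ∑ p ∈ dyadicNeighbors k z, ν (dyadicSquare k p.1 p.2) :=
        (measure_mono (closedBall_subset_biUnion_dyadicNeighbors k z)).trans
          (measure_biUnion_finset_le _ _)
    _ ≤ (dyadicNeighbors k z).card • ENNReal.ofReal (h (2 ^ (-k))) :=
        Finset.sum_le_card_nsmul _ _ _ fun _ hp =>
          measure_dyadicSquare_le_of_notMem_Gset hz hk (mem_dilatedSquare_of_mem_dyadicNeighbors hp)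
    _ = 9 * ENNReal.ofReal (h (2 ^ (-k))) := by
        rw [card_dyadicNeighbors, nsmul_eq_mul, Nat.cast_ofNat]

theorem measureReal_ball_le_of_notMem_Gset {C δ r : ℝ} (hC : 0 ≤ C)
    (hh : ∀ t ∈ Ioc 0 δ, h t ≤ C * t) (hz : z ∉ Gset ν h s) (hr : 0 < r) (hrδ : 2 * r ≤ δ)
    (hrs : 2 * r ≤ s) : ν.real (ball z r) ≤ 18 * C * r := by
  obtain ⟨k, hrk, hkr⟩ := exists_zpow_neg_mem_Ico (one_lt_two (α := ℝ)) hr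
  have hhk : h (2 ^ (-k)) ≤ C * (2 * r) :=
    (hh _ ⟨by positivity, hkr.le.trans hrδ⟩).trans (by gcongr)
  refine ENNReal.toReal_le_of_le_ofReal (by positivity) ?_
  calc ν (ball z r)
      ≤ ν (closedBall z (2 ^ (-k))) :=
        measure_mono (ball_subset_closedBall.trans (closedBall_subset_closedBall hrk))
    _ ≤ 9 * ENNReal.ofReal (h (2 ^ (-k))) :=
        measure_closedBall_two_zpow_le_of_notMem_Gset hz (hkr.le.trans hrs)
    _ ≤ 9 * ENNReal.ofReal (C * (2 * r)) := by gcongr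
    _ = ENNReal.ofReal (18 * C * r) := by
        rw [← ENNReal.ofReal_ofNat 9, ← ENNReal.ofReal_mul (by norm_num)]
        ring_nf

end Gset

theorem exists_measureReal_ball_le_mul_of_forall_le {X : Type*} [PseudoMetricSpace X]
    [MeasurableSpace X] (ν : Measure X) [IsFiniteMeasure ν] {E : Set X} {A ρ : ℝ} (hρ : 0 < ρ)
    (hsmall : ∀ z ∈ E, ∀ r ∈ Ioc 0 ρ, ν.real (ball z r) ≤ A * r) :
    ∃ M : ℝ, ∀ z ∈ E, ∀ r > 0, ν.real (ball z r) ≤ M * r := by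
  refine ⟨max A (ν.real univ / ρ), fun z hz r hr => ?_⟩
  rcases le_or_gt r ρ with hrρ | hρr
  · exact (hsmall z hz r ⟨hr, hrρ⟩).trans (by gcongr; exact le_max_left _ _)
  · calc ν.real (ball z r) ≤ ν.real univ := measureReal_mono (subset_univ _)
      _ = ν.real univ / ρ * ρ := (div_mul_cancel₀ _ hρ.ne').symm
      _ ≤ max A (ν.real univ / ρ) * r := by gcongr; exact le_max_right _ _

theorem carleson_constant_finite_outside_Gset_general
    (ν : Measure ℂ) [IsFiniteMeasure ν]
    (h : ℝ → ℝ) (hh : h =O[𝓝[>] 0] fun t => t) (s : ℝ) (hs : 0 < s) :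
    ∃ M : ℝ, ∀ z ∉ Gset ν h s, ∀ r > (0 : ℝ), (ν (ball z r)).toReal ≤ M * r := by
  obtain ⟨C, hC, hbound⟩ := hh.exists_pos
  obtain ⟨δ, hδ, hIoc⟩ := mem_nhdsGT_iff_exists_Ioc_subset.1 hbound.bound
  have hlinear : ∀ t ∈ Ioc 0 δ, h t ≤ C * t := fun t ht =>
    (le_abs_self _).trans ((hIoc ht).trans_eq (by rw [Real.norm_of_nonneg ht.1.le]))
  refine exists_measureReal_ball_le_mul_of_forall_le ν (E := (Gset ν h s)ᶜ) (A := 18 * C)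
    (half_pos (lt_min hδ hs)) fun z hz r hr => ?_
  have hr_min : 2 * r ≤ min δ s := by linarith [hr.2]
  exact measureReal_ball_le_of_notMem_Gset hC.le hlinear hz hr.1
    (hr_min.trans (min_le_left _ _)) (hr_min.trans (min_le_right _ _))

theorem carleson_constant_finite_outside_Gset
    (ν : Measure ℂ) [IsFiniteMeasure ν]
    (h : ℝ → ℝ) (hscale : IsScaleFunction h) (s : ℝ) (hs : 0 < s) :
    ∃ M : ℝ, ∀ z ∉ Gset ν h s, ∀ r > (0 : ℝ), (ν (ball z r)).toReal ≤ M * r :=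
  carleson_constant_finite_outside_Gset_general ν h hscale.isBigO_id s hs

end
end
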